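/- arXiv:2307.04069 — 2 statements merged into one kernel-verified Lean document; each statement's English description precedes it below -/
import Mathlib

section
/- If α₁ ≥ α₂ ≥ … ≥ αₙ are real numbers, then the function f : S^{n×n} → ℝ defined by f(X) = Σ_{i=1}^{n} αᵢ λᵢ(X) is convex. -/
open Matrix

/-- The vector of eigenvalues of a real symmetric matrix, in descending order
(junk value `0` if the matrix is not symmetric). -/
noncomputable def eigs {n : ℕ} (X : Matrix (Fin n) (Fin n) ℝ) : Fin n → ℝ :=
  if hX : X.IsHermitian then
    fun i => (hX.eigenvalues ∘ Tuple.sort hX.eigenvalues) i.rev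
  else fun _ => 0

/-!
The function is a pointwise maximum of linear functions, hence convex: `∑ i, α i * λ i (X)` is the
largest value of `∑ i, α i * ⟪b i, X (b i)⟫` over all orthonormal bases `b`, attained at an ordered
eigenbasis `v` of `X`. Indeed `⟪b i, X (b i)⟫ = ∑ j, |⟪b i, v j⟫|² * λ j (X)`, where the weights
form a doubly stochastic matrix. By Birkhoff's theorem this matrix is a convex combination of
permutation matrices, and for those the bound is the rearrangement inequality.
-/

section Convexity

variable {𝕜 E β : Type*} {ι : Sort*} [Semiring 𝕜] [PartialOrder 𝕜] [AddCommMonoid E] [SMul 𝕜 E]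
  [AddCommMonoid β] [PartialOrder β] [IsOrderedAddMonoid β] [SMul 𝕜 β] [PosSMulMono 𝕜 β]

theorem convexOn_of_isLUB_range {s : Set E} {f : E → β} {g : ι → E → β} (hs : Convex 𝕜 s)
    (hg : ∀ i, ConvexOn 𝕜 s (g i)) (hf : ∀ x ∈ s, IsLUB (Set.range fun i => g i x) (f x)) :
    ConvexOn 𝕜 s f := by
  refine ⟨hs, fun x hx y hy a b ha hb hab => ?_⟩
  refine (isLUB_le_iff (hf _ (hs hx hy ha hb hab))).2 (Set.forall_mem_range.2 fun i => ?_)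
  have hgf : ∀ z ∈ s, g i z ≤ f z := fun z hz => (hf z hz).1 (Set.mem_range_self i)
  calc g i (a • x + b • y)
      ≤ a • g i x + b • g i y := (hg i).2 hx hy ha hb hab
    _ ≤ a • f x + b • f y := by gcongr <;> exact hgf _ ‹_›

end Convexity

section DoublyStochastic

variable {ι : Type*} [Fintype ι] [DecidableEq ι]

theorem dotProduct_mulVec_le_of_mem_doublyStochastic {R : Type*} [Field R] [LinearOrder R]
    [IsStrictOrderedRing R] {f g : ι → R} (hfg : Monovary f g) {M : Matrix ι ι R}
    (hM : M ∈ doublyStochastic R ι) : f ⬝ᵥ M *ᵥ g ≤ f ⬝ᵥ g := by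
  have hlin : IsLinearMap R fun N : Matrix ι ι R => f ⬝ᵥ N *ᵥ g :=
    ⟨fun N N' => by rw [add_mulVec, dotProduct_add],
      fun c N => by rw [smul_mulVec, dotProduct_smul]⟩
  rw [← SetLike.mem_coe, doublyStochastic_eq_convexHull_permMatrix] at hM
  refine convexHull_min ?_ (convex_halfSpace_le hlin (f ⬝ᵥ g)) hM
  rintro _ ⟨σ, rfl⟩
  rw [Set.mem_ofPred_eq, permMatrix_mulVec]
  exact hfg.sum_mul_comp_perm_le_sum_mul

variable {𝕜 E : Type*} [RCLike 𝕜] [NormedAddCommGroup E] [InnerProductSpace 𝕜 E]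

theorem of_sq_norm_inner_mem_doublyStochastic (b v : OrthonormalBasis ι 𝕜 E) :
    (of fun i j => ‖inner 𝕜 (b i) (v j)‖ ^ 2) ∈ doublyStochastic ℝ ι := by
  refine mem_doublyStochastic_iff_sum.2 ⟨fun i j => sq_nonneg _, fun i => ?_, fun j => ?_⟩
  · simp only [of_apply, v.sum_sq_norm_inner_left, b.norm_eq_one, one_pow]
  · simp only [of_apply, b.sum_sq_norm_inner_right, v.norm_eq_one, one_pow]

end DoublyStochastic

section Eigenbasis

variable {𝕜 E ι : Type*} [RCLike 𝕜] [NormedAddCommGroup E] [InnerProductSpace 𝕜 E] [Fintype ι]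
  {T : E →ₗ[𝕜] E} {v : OrthonormalBasis ι 𝕜 E} {l : ι → ℝ}

theorem re_inner_apply_self_eq_sum (hv : ∀ j, T (v j) = (l j : 𝕜) • v j) (x : E) :
    RCLike.re (inner 𝕜 x (T x)) = ∑ j, ‖inner 𝕜 x (v j)‖ ^ 2 * l j := by
  have hTx : T x = ∑ j, inner 𝕜 (v j) x • (l j : 𝕜) • v j := by
    conv_lhs => rw [← v.sum_repr' x]
    simp only [map_sum, map_smul, hv]
  rw [hTx, inner_sum, map_sum]
  refine Finset.sum_congr rfl fun j _ => ?_
  rw [inner_smul_right, inner_smul_right, mul_left_comm, RCLike.re_ofReal_mul,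
    inner_mul_symm_re_eq_norm, norm_mul, norm_inner_symm, ← sq, mul_comm]

theorem isGreatest_sum_mul_re_inner (hv : ∀ j, T (v j) = (l j : 𝕜) • v j) {f : ι → ℝ}
    (hfl : Monovary f l) :
    IsGreatest
      (Set.range fun b : OrthonormalBasis ι 𝕜 E => ∑ i, f i * RCLike.re (inner 𝕜 (b i) (T (b i))))
      (∑ i, f i * l i) := by
  classical
  refine ⟨⟨v, ?_⟩, Set.forall_mem_range.2 fun b => ?_⟩
  · simp only [hv, inner_smul_right, v.inner_eq_one, mul_one, RCLike.ofReal_re]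
  · simp only [re_inner_apply_self_eq_sum hv]
    exact dotProduct_mulVec_le_of_mem_doublyStochastic hfl
      (of_sq_norm_inner_mem_doublyStochastic b v)

end Eigenbasis

theorem isLinearMap_sum_mul_re_inner_toEuclideanLin {𝕜 ι κ : Type*} [RCLike 𝕜] [Fintype ι]
    [DecidableEq ι] [Fintype κ] (f : κ → ℝ) (b : κ → EuclideanSpace 𝕜 ι) :
    IsLinearMap ℝ fun X : Matrix ι ι 𝕜 =>
      ∑ i, f i * RCLike.re (inner 𝕜 (b i) (toEuclideanLin X (b i))) where
  map_add X Y := by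
    simp only [map_add, LinearMap.add_apply, inner_add_right, mul_add, Finset.sum_add_distrib]
  map_smul c X := by
    simp only [RCLike.real_smul_eq_coe_smul (K := 𝕜) c X, map_smul, LinearMap.smul_apply,
      inner_smul_right, RCLike.re_ofReal_mul, mul_left_comm _ c, ← Finset.mul_sum, smul_eq_mul]

theorem convex_setOf_isHermitian {𝕜 ι : Type*} [RCLike 𝕜] :
    Convex ℝ {X : Matrix ι ι 𝕜 | X.IsHermitian} :=
  (selfAdjoint.submodule ℝ (Matrix ι ι 𝕜)).convex

section Eigs

variable {n : ℕ}

theorem eigs_antitone (X : Matrix (Fin n) (Fin n) ℝ) : Antitone (eigs X) := by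
  unfold eigs
  split_ifs with hX
  · exact (Tuple.monotone_sort hX.eigenvalues).comp_antitone Fin.rev_anti
  · exact antitone_const

theorem exists_orthonormalBasis_toEuclideanLin_eq_eigs_smul {X : Matrix (Fin n) (Fin n) ℝ}
    (hX : X.IsHermitian) :
    ∃ v : OrthonormalBasis (Fin n) ℝ (EuclideanSpace ℝ (Fin n)),
      ∀ j, toEuclideanLin X (v j) = eigs X j • v j := by
  have heigs (j : Fin n) : eigs X j = hX.eigenvalues (Tuple.sort hX.eigenvalues j.rev) := by
    rw [eigs, dif_pos hX, Function.comp_apply]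
  refine ⟨hX.eigenvectorBasis.reindex ((Tuple.sort hX.eigenvalues).symm.trans Fin.revPerm),
    fun j => WithLp.ofLp_injective 2 ?_⟩
  simpa [heigs] using hX.mulVec_eigenvectorBasis (Tuple.sort hX.eigenvalues j.rev)

end Eigs

/-- If `α₁ ≥ α₂ ≥ … ≥ αₙ`, then `X ↦ Σᵢ αᵢ λᵢ(X)` is a convex function on the set of
real symmetric `n×n` matrices. -/
theorem statement3 {n : ℕ} (α : Fin n → ℝ) (hα : Antitone α) :
    ConvexOn ℝ {X : Matrix (Fin n) (Fin n) ℝ | X.IsHermitian}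
      (fun X => ∑ i, α i * eigs X i) := by
  refine convexOn_of_isLUB_range convex_setOf_isHermitian
    (fun b : OrthonormalBasis (Fin n) ℝ (EuclideanSpace ℝ (Fin n)) =>
      ((isLinearMap_sum_mul_re_inner_toEuclideanLin α b).mk' _).convexOn convex_setOf_isHermitian)
    fun X hX => ?_
  obtain ⟨v, hv⟩ := exists_orthonormalBasis_toEuclideanLin_eq_eigs_smul hX
  exact (isGreatest_sum_mul_re_inner hv (hα.monovary (eigs_antitone X))).isLUB
end

section
/- Let C ∈ ℝ^{n×n} and write (1/2)(C + Cᵀ) = P Ω Pᵀ with P orthogonal and Ω = Diag(ω₁,…,ωₙ) with ω₁ ≥ ω₂ ≥ … ≥ ωₙ. Suppose λ* attains the minimum of Σ_{i=1}^{n} ωᵢ λ_{n+1−i} over Λ(A,b) := {λ ∈ ℝⁿ : Aλ ≤ b, λ₁ ≥ … ≥ λₙ}. Then X* := P Diag(λ*ₙ, λ*_{n−1}, …, λ*₁) Pᵀ belongs to S_λ(A,b) and is a global minimizer: ⟨C, X*⟩ ≤ ⟨C, X⟩ for all X ∈ S_λ(A,b), where ⟨C, X⟩ := Tr(Cᵀ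 X). -/
open Matrix

/-- The eigenvalue constraint set `S_λ(A,b) = {X ∈ S^{n×n} : A λ(X) ≤ b}`. -/
def SLambda {m n : ℕ} (A : Matrix (Fin m) (Fin n) ℝ) (b : Fin m → ℝ) :
    Set (Matrix (Fin n) (Fin n) ℝ) :=
  {X | X.IsHermitian ∧ ∀ i, A.mulVec (eigs X) i ≤ b i}

/-- The polyhedron `Λ(A,b) = {λ ∈ ℝⁿ : Aλ ≤ b, λ₁ ≥ … ≥ λₙ}`. -/
def LambdaSet {m n : ℕ} (A : Matrix (Fin m) (Fin n) ℝ) (b : Fin m → ℝ) :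
    Set (Fin n → ℝ) :=
  {l | (∀ i, A.mulVec l i ≤ b i) ∧ Antitone l}

/-!
Diagonalising both factors, the trace of the product of two Hermitian matrices with spectra `f` and
`g` is `∑ f i * |W i j| ^ 2 * g j` with `W` unitary. The matrix `|W i j| ^ 2` is doubly stochastic,
so by Birkhoff's theorem and the rearrangement inequality the trace is at least the pairing of `f`
with `g` sorted in the opposite order. For `⟨C, X⟩`, which only sees the symmetric part of `C`, this
lower bound is the objective of the vector problem at the eigenvalues of `X`, and it is attained
when `X` is diagonal in the eigenbasis `P` with oppositely ordered eigenvalues.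
-/

section DoublyStochastic

variable {ι R : Type*} [Fintype ι] [DecidableEq ι]
  [Field R] [LinearOrder R] [IsStrictOrderedRing R]

-- The right-hand side is linear in `M`, so by Birkhoff's theorem it suffices to treat permutation
-- matrices, where the claim is the rearrangement inequality.
lemma dotProduct_comp_perm_le_dotProduct_mulVec {M : Matrix ι ι R}
    (hM : M ∈ doublyStochastic R ι) {f g : ι → R} {σ : Equiv.Perm ι} (hfg : Antivary f (g ∘ σ)) :
    f ⬝ᵥ (g ∘ σ) ≤ f ⬝ᵥ M *ᵥ g := by
  have convex_halfspace : Convex R {N : Matrix ι ι R | f ⬝ᵥ (g ∘ σ) ≤ f ⬝ᵥ N *ᵥ g} :=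
    convex_halfSpace_ge ⟨fun N N' => by rw [add_mulVec, dotProduct_add],
      fun c N => by rw [smul_mulVec, dotProduct_smul]⟩ _
  have perm_mem : {N | ∃ τ : Equiv.Perm ι, τ.permMatrix R = N} ⊆
      {N : Matrix ι ι R | f ⬝ᵥ (g ∘ σ) ≤ f ⬝ᵥ N *ᵥ g} := by
    rintro _ ⟨τ, rfl⟩
    have rearrangement := hfg.sum_mul_le_sum_mul_comp_perm (σ := τ.trans σ.symm)
    simpa [dotProduct, permMatrix_mulVec] using rearrangement
  rw [← SetLike.mem_coe, doublyStochastic_eq_convexHull_permMatrix] at hM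
  exact convexHull_min perm_mem convex_halfspace hM

end DoublyStochastic

section Unitary

variable {ι κ 𝕜 : Type*} [Fintype ι] [DecidableEq ι] [Fintype κ] [DecidableEq κ] [RCLike 𝕜]

/-- The matrix of squared moduli of the entries of `W`. For unitary `W`, the case in which it is
called unistochastic, it is doubly stochastic. -/
def unistochastic (W : Matrix ι κ 𝕜) : Matrix ι κ ℝ :=
  W.map fun w => ‖w‖ ^ 2

lemma unistochastic_mem_doublyStochastic {W : Matrix ι ι 𝕜} (hW : W ∈ unitaryGroup ι 𝕜) :
    unistochastic W ∈ doublyStochastic ℝ ι := by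
  refine mem_doublyStochastic_iff_sum.2 ⟨fun i j => sq_nonneg _, fun i => ?_, fun j => ?_⟩
  · have row_norm := congrFun₂ (mem_unitaryGroup_iff.1 hW) i i
    simp only [mul_apply, star_apply, RCLike.star_def, RCLike.mul_conj, one_apply_eq] at row_norm
    exact_mod_cast row_norm
  · have col_norm := congrFun₂ (mem_unitaryGroup_iff'.1 hW) j j
    simp only [mul_apply, star_apply, RCLike.star_def, RCLike.conj_mul, one_apply_eq] at col_norm
    exact_mod_cast col_norm

lemma trace_diagonal_mul_conj_diagonal (W : Matrix ι κ 𝕜) (f : ι → ℝ) (g : κ → ℝ) :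
    (diagonal (RCLike.ofReal ∘ f) * (W * diagonal (RCLike.ofReal ∘ g : κ → 𝕜) * Wᴴ)).trace =
      ((f ⬝ᵥ unistochastic W *ᵥ g : ℝ) : 𝕜) := by
  simp only [trace, diag_apply, diagonal_mul, dotProduct, mulVec, unistochastic, map_apply,
    RCLike.ofReal_sum, RCLike.ofReal_mul, RCLike.ofReal_pow, Function.comp_apply]
  refine Finset.sum_congr rfl fun i _ => congrArg _ ?_
  rw [mul_apply]
  refine Finset.sum_congr rfl fun j _ => ?_
  rw [mul_diagonal, conjTranspose_apply, RCLike.star_def, Function.comp_apply, mul_right_comm,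
    RCLike.mul_conj]

lemma dotProduct_comp_perm_le_re_trace_mul {U V : Matrix ι ι 𝕜} (hU : U ∈ unitaryGroup ι 𝕜)
    (hV : V ∈ unitaryGroup ι 𝕜) {f g : ι → ℝ} {σ : Equiv.Perm ι} (hfg : Antivary f (g ∘ σ)) :
    f ⬝ᵥ (g ∘ σ) ≤ RCLike.re (U * diagonal (RCLike.ofReal ∘ f) * star U *
      (V * diagonal (RCLike.ofReal ∘ g) * star V)).trace := by
  have trace_eq : (U * diagonal (RCLike.ofReal ∘ f) * star U *
      (V * diagonal (RCLike.ofReal ∘ g) * star V)).trace =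
      ((f ⬝ᵥ unistochastic (star U * V) *ᵥ g : ℝ) : 𝕜) := by
    rw [← trace_diagonal_mul_conj_diagonal, ← star_eq_conjTranspose, star_mul, star_star,
      Matrix.mul_assoc U, Matrix.mul_assoc U, trace_mul_comm]
    simp only [Matrix.mul_assoc]
  rw [trace_eq, RCLike.ofReal_re]
  exact dotProduct_comp_perm_le_dotProduct_mulVec
    (unistochastic_mem_doublyStochastic (mul_mem (Unitary.star_mem hU) hV)) hfg

end Unitary

lemma roots_charpoly_conj_diagonal {ι R : Type*} [Fintype ι] [DecidableEq ι] [CommRing R]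
    [IsDomain R] {P Q : Matrix ι ι R} (hQP : Q * P = 1) (d : ι → R) :
    (P * diagonal d * Q).charpoly.roots = Finset.univ.val.map d := by
  rw [charpoly_mul_comm, ← Matrix.mul_assoc, hQP, Matrix.one_mul, charpoly_diagonal,
    ← Polynomial.roots_multiset_prod_X_sub_C (Finset.univ.val.map d), Multiset.map_map]
  rfl

lemma trace_conj_mul_conj {ι κ R : Type*} [Fintype ι] [Fintype κ] [DecidableEq κ]
    [CommSemiring R] {P : Matrix ι κ R} {Q : Matrix κ ι R} (hQP : Q * P = 1)
    (D E : Matrix κ κ R) : (P * D * Q * (P * E * Q)).trace = (D * E).trace := by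
  have conj_mul_conj : P * D * Q * (P * E * Q) = P * (D * E) * Q := by
    simp only [Matrix.mul_assoc]
    rw [← Matrix.mul_assoc Q P, hQP, Matrix.one_mul]
  rw [conj_mul_conj, trace_mul_comm, ← Matrix.mul_assoc, hQP, Matrix.one_mul]

lemma isHermitian_conj_diagonal {ι κ R : Type*} [Fintype κ] [DecidableEq κ] [Semiring R]
    [StarRing R] [TrivialStar R] (P : Matrix ι κ R) (d : κ → R) :
    (P * diagonal d * Pᵀ).IsHermitian := by
  simpa using isHermitian_mul_mul_conjTranspose P (isHermitian_diagonal d)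

lemma trace_half_smul_add_transpose_mul {ι K : Type*} [Fintype ι] [Field K] [NeZero (2 : K)]
    (C : Matrix ι ι K) {X : Matrix ι ι K} (hX : X.IsSymm) :
    ((1 / 2 : K) • (C + Cᵀ) * X).trace = (Cᵀ * X).trace := by
  have trace_eq : (C * X).trace = (Cᵀ * X).trace := by
    rw [← trace_transpose, transpose_mul, hX.eq, trace_mul_comm]
  rw [Matrix.smul_mul, trace_smul, Matrix.add_mul, trace_add, trace_eq, smul_eq_mul, ← two_mul,
    ← mul_assoc, one_div_mul_cancel two_ne_zero, one_mul]

lemma map_univ_comp_equiv {α β γ : Type*} [Fintype α] [Fintype β] (f : β → γ) (e : α ≃ β) :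
    Finset.univ.val.map (f ∘ e) = Finset.univ.val.map f := by
  rw [← Multiset.map_map, Multiset.map_univ_val_equiv]

lemma eq_of_antitone_of_map_univ_eq {α : Type*} [PartialOrder α] {n : ℕ} {f g : Fin n → α}
    (hf : Antitone f) (hg : Antitone g)
    (hfg : Finset.univ.val.map f = Finset.univ.val.map g) : f = g := by
  rw [Fin.univ_val_map, Fin.univ_val_map, Multiset.coe_eq_coe] at hfg
  exact List.ofFn_injective (hfg.eq_of_sortedGE hf.sortedGE_ofFn hg.sortedGE_ofFn)

section Eigs

variable {n : ℕ} {X P : Matrix (Fin n) (Fin n) ℝ}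

lemma eigs_comp_rev (hX : X.IsHermitian) :
    eigs X ∘ Fin.rev = hX.eigenvalues ∘ Tuple.sort hX.eigenvalues := by
  funext i
  rw [eigs, dif_pos hX, Function.comp_apply, Fin.rev_rev]

lemma antitone_eigs (hX : X.IsHermitian) : Antitone (eigs X) := by
  have monotone_rev : Monotone (eigs X ∘ Fin.rev) := eigs_comp_rev hX ▸ Tuple.monotone_sort _
  simpa [Function.comp_def] using monotone_rev.comp_antitone Fin.rev_anti

lemma map_univ_eigs (hX : X.IsHermitian) :
    Finset.univ.val.map (eigs X) = X.charpoly.roots := by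
  calc Finset.univ.val.map (eigs X)
      = Finset.univ.val.map (eigs X ∘ Fin.rev) := (map_univ_comp_equiv _ Fin.revPerm).symm
    _ = Finset.univ.val.map hX.eigenvalues := by rw [eigs_comp_rev hX, map_univ_comp_equiv]
    _ = X.charpoly.roots := hX.roots_charpoly_eq_eigenvalues.symm

lemma eigs_conj_diagonal_rev (hP : Pᵀ * P = 1) {l : Fin n → ℝ} (hl : Antitone l) :
    eigs (P * diagonal (fun i => l i.rev) * Pᵀ) = l := by
  have hermitian := isHermitian_conj_diagonal P fun i => l i.rev
  refine eq_of_antitone_of_map_univ_eq (antitone_eigs hermitian) hl ?_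
  rw [map_univ_eigs hermitian, roots_charpoly_conj_diagonal hP]
  exact map_univ_comp_equiv l Fin.revPerm

lemma sum_mul_eigs_rev_le_trace_mul (hP : Pᵀ * P = 1) {ω : Fin n → ℝ} (hω : Antitone ω)
    (hX : X.IsHermitian) :
    ∑ i, ω i * eigs X i.rev ≤ (P * diagonal ω * Pᵀ * X).trace := by
  have antivary : Antivary ω (hX.eigenvalues ∘ Tuple.sort hX.eigenvalues) :=
    hω.antivary (Tuple.monotone_sort _)
  calc ∑ i, ω i * eigs X i.rev = ω ⬝ᵥ (hX.eigenvalues ∘ Tuple.sort hX.eigenvalues) := by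
        rw [← eigs_comp_rev hX]
        rfl
    _ ≤ _ := dotProduct_comp_perm_le_re_trace_mul (mem_unitaryGroup_iff'.2 hP)
        hX.eigenvectorUnitary.2 antivary
    _ = (P * diagonal ω * Pᵀ * X).trace := by
        conv_rhs => rw [hX.spectral_theorem, Unitary.conjStarAlgAut_apply]
        rfl

end Eigs

theorem statement6_general {n : ℕ} (K : Set (Fin n → ℝ)) (C P : Matrix (Fin n) (Fin n) ℝ)
    (ω : Fin n → ℝ) (hP : Pᵀ * P = 1) (hω : Antitone ω)
    (hdecomp : (1 / 2 : ℝ) • (C + Cᵀ) = P * diagonal ω * Pᵀ)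
    (lam : Fin n → ℝ) (hlam : lam ∈ K) (hanti : Antitone lam)
    (hopt : ∀ μ ∈ K, Antitone μ → ∑ i, ω i * lam i.rev ≤ ∑ i, ω i * μ i.rev) :
    ((P * diagonal (fun i : Fin n => lam i.rev) * Pᵀ).IsHermitian ∧
      eigs (P * diagonal (fun i : Fin n => lam i.rev) * Pᵀ) ∈ K) ∧
    ∀ X : Matrix (Fin n) (Fin n) ℝ, X.IsHermitian → eigs X ∈ K →
      (Cᵀ * (P * diagonal (fun i : Fin n => lam i.rev) * Pᵀ)).trace ≤ (Cᵀ * X).trace := by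
  have hermitian := isHermitian_conj_diagonal P fun i : Fin n => lam i.rev
  refine ⟨⟨hermitian, (eigs_conj_diagonal_rev hP hanti).symm ▸ hlam⟩, fun X hX hXK => ?_⟩
  calc (Cᵀ * (P * diagonal (fun i : Fin n => lam i.rev) * Pᵀ)).trace
      = (P * diagonal ω * Pᵀ * (P * diagonal (fun i : Fin n => lam i.rev) * Pᵀ)).trace := by
        rw [← trace_half_smul_add_transpose_mul C (isHermitian_iff_isSymm.1 hermitian), hdecomp]
    _ = ∑ i, ω i * lam i.rev := by
        rw [trace_conj_mul_conj hP, diagonal_mul_diagonal, trace_diagonal]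
    _ ≤ ∑ i, ω i * eigs X i.rev := hopt _ hXK (antitone_eigs hX)
    _ ≤ (P * diagonal ω * Pᵀ * X).trace := sum_mul_eigs_rev_le_trace_mul hP hω hX
    _ = (Cᵀ * X).trace := by
        rw [← hdecomp, trace_half_smul_add_transpose_mul C (isHermitian_iff_isSymm.1 hX)]

/-- Exact solution of `SCO-Eig` with linear objective `⟨C, X⟩ = Tr(Cᵀ X)`:
if `(1/2)(C + Cᵀ) = P Diag(ω) Pᵀ` with `P` orthogonal and `ω` descending, and `λ*`
minimizes `Σᵢ ωᵢ λ_{n+1−i}` over `Λ(A,b)`, then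
`X* = P Diag(λ*ₙ, …, λ*₁) Pᵀ` is a global minimizer of `⟨C, ·⟩` over `S_λ(A,b)`. -/
theorem statement6 {m n : ℕ} (A : Matrix (Fin m) (Fin n) ℝ) (b : Fin m → ℝ)
    (C P : Matrix (Fin n) (Fin n) ℝ) (ω : Fin n → ℝ)
    (hP : Pᵀ * P = 1) (hP' : P * Pᵀ = 1)
    (hω : Antitone ω)
    (hdecomp : (1 / 2 : ℝ) • (C + Cᵀ) = P * Matrix.diagonal ω * Pᵀ)
    (lam : Fin n → ℝ)
    (hfeas : lam ∈ LambdaSet A b)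
    (hopt : ∀ μ ∈ LambdaSet A b, ∑ i : Fin n, ω i * lam i.rev ≤ ∑ i : Fin n, ω i * μ i.rev) :
    P * Matrix.diagonal (fun i : Fin n => lam i.rev) * Pᵀ ∈ SLambda A b ∧
    ∀ X ∈ SLambda A b,
      (Cᵀ * (P * Matrix.diagonal (fun i : Fin n => lam i.rev) * Pᵀ)).trace ≤ (Cᵀ * X).trace := by
  obtain ⟨mem, minimal⟩ := statement6_general {l | ∀ i, A.mulVec l i ≤ b i} C P ω hP hω hdecomp lam
    hfeas.1 hfeas.2 fun μ hμ hμ_anti => hopt μ ⟨hμ, hμ_anti⟩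
  exact ⟨mem, fun X hX => minimal X hX.1 hX.2⟩
end
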